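/- arXiv:2302.07066 — 8 statements merged into one kernel-verified Lean document; each statement's English description precedes it below -/
import Mathlib

section
/- Let f : [0,1] → ℝ be quasi-continuous at every point of [0,1]. Then for every x ∈ [0,1] and every m ∈ ℕ, the following are equivalent: (i) there exists N ∈ ℕ such that |f(q) - f(r)| ≤ 2^{-m} for all rationals q, r ∈ [0,1] with |q - x| < 2^{-N} and |r - x| < 2^{-N}; (ii) there exists N ∈ ℕ such that |f(w) - f(z)| ≤ 2^{-m} for all w, z ∈ [0,1] with |w - x| < 2^{-N} and |z - x| < 2^{-N}. -/
/-- `f` is quasi-continuous at `x₀ ∈ [0,1]`: for every `ε > 0` and every set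
`U ⊆ [0,1]` containing `x₀` that is open in the subspace topology of `[0,1]`,
there is a nonempty set `G ⊆ U`, open in the subspace topology of `[0,1]`,
with `|f x - f x₀| < ε` for all `x ∈ G`. -/
def QuasiContinuousAt (f : ℝ → ℝ) (x₀ : ℝ) : Prop :=
  ∀ ε > (0:ℝ), ∀ U : Set ℝ, U ⊆ Set.Icc 0 1 → x₀ ∈ U →
    IsOpen (Subtype.val ⁻¹' U : Set (Set.Icc (0:ℝ) 1)) →
    ∃ G : Set ℝ, G.Nonempty ∧ G ⊆ U ∧
      IsOpen (Subtype.val ⁻¹' G : Set (Set.Icc (0:ℝ) 1)) ∧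
      ∀ x ∈ G, |f x - f x₀| < ε

/-- A nonempty relatively open subset of `[0,1]` contains a rational number. -/
theorem exists_rat_mem_of_isOpen_preimage_Icc {G : Set ℝ} (hne : G.Nonempty)
    (hsub : G ⊆ Set.Icc 0 1)
    (hG : IsOpen (Subtype.val ⁻¹' G : Set (Set.Icc (0:ℝ) 1))) : ∃ q : ℚ, (q:ℝ) ∈ G := by
  obtain ⟨V, hV, hVG⟩ := isOpen_induced_iff.mp hG
  have mem_iff : ∀ y ∈ Set.Icc (0:ℝ) 1, y ∈ V ↔ y ∈ G := fun y hy =>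
    Set.ext_iff.mp hVG ⟨y, hy⟩
  obtain ⟨y, hy⟩ := hne
  have hcl : y ∈ closure (Set.Ioo (0:ℝ) 1) := by
    rw [closure_Ioo zero_ne_one]
    exact hsub hy
  obtain ⟨q, hq⟩ := Rat.denseRange_cast.exists_mem_open (hV.inter isOpen_Ioo)
    (mem_closure_iff.mp hcl V hV ((mem_iff y (hsub hy)).mpr hy))
  exact ⟨q, (mem_iff _ (Set.Ioo_subset_Icc_self hq.2)).mp hq.1⟩

/-- Near a point of quasi-continuity, the value is approximated at nearby rationals. -/
theorem QuasiContinuousAt.exists_rat_abs_sub_lt {f : ℝ → ℝ} {w : ℝ} (hf : QuasiContinuousAt f w)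
    (hw : w ∈ Set.Icc (0:ℝ) 1) {V : Set ℝ} (hV : IsOpen V) (hwV : w ∈ V) {ε : ℝ} (hε : 0 < ε) :
    ∃ q : ℚ, (q:ℝ) ∈ Set.Icc (0:ℝ) 1 ∧ (q:ℝ) ∈ V ∧ |f q - f w| < ε := by
  have hopen : IsOpen (Subtype.val ⁻¹' (V ∩ Set.Icc 0 1) : Set (Set.Icc (0:ℝ) 1)) := by
    convert hV.preimage continuous_subtype_val using 1
    ext y
    simp
  obtain ⟨G, hne, hGU, hG, hfG⟩ :=
    hf ε hε (V ∩ Set.Icc 0 1) Set.inter_subset_right ⟨hwV, hw⟩ hopen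
  obtain ⟨q, hq⟩ :=
    exists_rat_mem_of_isOpen_preimage_Icc hne (hGU.trans Set.inter_subset_right) hG
  exact ⟨q, (hGU hq).2, (hGU hq).1, hfG q hq⟩

theorem quasi_continuous_rational_oscillation_equiv
    (f : ℝ → ℝ) (hf : ∀ x ∈ Set.Icc (0:ℝ) 1, QuasiContinuousAt f x) :
    ∀ x ∈ Set.Icc (0:ℝ) 1, ∀ m : ℕ,
      ((∃ N : ℕ, ∀ q r : ℚ, (q:ℝ) ∈ Set.Icc (0:ℝ) 1 → (r:ℝ) ∈ Set.Icc (0:ℝ) 1 →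
          |(q:ℝ) - x| < (2:ℝ) ^ (-(N:ℤ)) → |(r:ℝ) - x| < (2:ℝ) ^ (-(N:ℤ)) →
          |f q - f r| ≤ (2:ℝ) ^ (-(m:ℤ))) ↔
       (∃ N : ℕ, ∀ w ∈ Set.Icc (0:ℝ) 1, ∀ z ∈ Set.Icc (0:ℝ) 1,
          |w - x| < (2:ℝ) ^ (-(N:ℤ)) → |z - x| < (2:ℝ) ^ (-(N:ℤ)) →
          |f w - f z| ≤ (2:ℝ) ^ (-(m:ℤ)))) := by
  intro x _ m
  constructor
  · rintro ⟨N, hN⟩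
    have hV : IsOpen {y : ℝ | |y - x| < (2:ℝ) ^ (-(N:ℤ))} :=
      isOpen_lt (by fun_prop) continuous_const
    refine ⟨N, fun w hw z hz hwx hzx => le_of_forall_pos_le_add fun ε hε => ?_⟩
    obtain ⟨q, hq, hqx, hqw⟩ := (hf w hw).exists_rat_abs_sub_lt hw hV hwx (half_pos hε)
    obtain ⟨r, hr, hrx, hrz⟩ := (hf z hz).exists_rat_abs_sub_lt hz hV hzx (half_pos hε)
    have hqr := hN q r hq hr hqx hrx
    rw [abs_lt] at hqw hrz
    rw [abs_le] at hqr ⊢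
    constructor <;> linarith
  · rintro ⟨N, hN⟩
    exact ⟨N, fun q r hq hr => hN q hq r hr⟩
end

section
/- Let f : [0,1] → ℝ be quasi-continuous at every point of [0,1]. Then for every x ∈ [0,1], f is continuous at x relative to [0,1] (i.e., ContinuousWithinAt f [0,1] x) if and only if for every m ∈ ℕ there exists N ∈ ℕ such that |f(q) - f(r)| ≤ 2^{-m} for all rationals q, r ∈ [0,1] with |q - x| < 2^{-N} and |r - x| < 2^{-N}. -/
/-- A function quasi-continuous at `y` has values at rationals near `y` that approximate `f y`. -/
theorem QuasiContinuousAt.exists_rat_near {f : ℝ → ℝ} {y : ℝ} (hf : QuasiContinuousAt f y)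
    (hy : y ∈ Set.Icc (0:ℝ) 1) {ε δ : ℝ} (hε : 0 < ε) (hδ : 0 < δ) :
    ∃ q : ℚ, (q:ℝ) ∈ Set.Icc (0:ℝ) 1 ∧ |(q:ℝ) - y| < δ ∧ |f q - f y| < ε := by
  have hopen : IsOpen (Subtype.val ⁻¹' (Metric.ball y δ ∩ Set.Icc 0 1) :
      Set (Set.Icc (0:ℝ) 1)) := by
    rw [Set.preimage_inter, Subtype.coe_preimage_self, Set.inter_univ]
    exact Metric.isOpen_ball.preimage continuous_subtype_val
  obtain ⟨G, ⟨g, hg⟩, hGU, hG, hGf⟩ := hf ε hε (Metric.ball y δ ∩ Set.Icc 0 1)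
    Set.inter_subset_right ⟨Metric.mem_ball_self hδ, hy⟩ hopen
  obtain ⟨V, hV, hVG⟩ := isOpen_induced_iff.mp hG
  have hmem : ∀ z (hz : z ∈ Set.Icc (0:ℝ) 1), z ∈ V ↔ z ∈ G := fun z hz =>
    Set.ext_iff.mp hVG ⟨z, hz⟩
  have hgI : g ∈ Set.Icc (0:ℝ) 1 := (hGU hg).2
  have hgc : g ∈ closure (Set.Ioo (0:ℝ) 1) := by rwa [closure_Ioo zero_ne_one]
  have hne : (V ∩ Set.Ioo (0:ℝ) 1).Nonempty :=
    mem_closure_iff.mp hgc V hV ((hmem g hgI).mpr hg)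
  obtain ⟨q, hqV, hqI⟩ := Rat.denseRange_cast.exists_mem_open (hV.inter isOpen_Ioo) hne
  have hqI' := Set.Ioo_subset_Icc_self hqI
  have hqG := (hmem q hqI').mp hqV
  exact ⟨q, hqI', by simpa [Real.dist_eq] using (hGU hqG).1, hGf q hqG⟩

/-- Every positive real exceeds some `2 ^ (-N)`. -/
theorem exists_two_zpow_neg_lt {ε : ℝ} (hε : 0 < ε) : ∃ N : ℕ, (2:ℝ) ^ (-(N:ℤ)) < ε := by
  obtain ⟨N, hN⟩ := exists_pow_lt_of_lt_one hε (by norm_num : (2:ℝ)⁻¹ < 1)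
  exact ⟨N, by simpa using hN⟩

theorem quasi_continuous_continuity_via_rationals
    (f : ℝ → ℝ) (hf : ∀ x ∈ Set.Icc (0:ℝ) 1, QuasiContinuousAt f x) :
    ∀ x ∈ Set.Icc (0:ℝ) 1,
      (ContinuousWithinAt f (Set.Icc 0 1) x ↔
        ∀ m : ℕ, ∃ N : ℕ, ∀ q r : ℚ,
          (q:ℝ) ∈ Set.Icc (0:ℝ) 1 → (r:ℝ) ∈ Set.Icc (0:ℝ) 1 →
          |(q:ℝ) - x| < (2:ℝ) ^ (-(N:ℤ)) → |(r:ℝ) - x| < (2:ℝ) ^ (-(N:ℤ)) →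
          |f q - f r| ≤ (2:ℝ) ^ (-(m:ℤ))) := by
  intro x hx
  rw [Metric.continuousWithinAt_iff]
  constructor
  · intro hc m
    have hm : (0:ℝ) < 2 ^ (-(m:ℤ)) := by positivity
    obtain ⟨δ, hδ, h⟩ := hc (2 ^ (-(m:ℤ)) / 2) (half_pos hm)
    obtain ⟨N, hN⟩ := exists_two_zpow_neg_lt hδ
    refine ⟨N, fun q r hq hr hqx hrx => ?_⟩
    have hfq := h hq (by rw [Real.dist_eq]; exact hqx.trans hN)
    have hfr := h hr (by rw [Real.dist_eq]; exact hrx.trans hN)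
    rw [← Real.dist_eq]
    linarith [dist_triangle_right (f q) (f r) (f x)]
  · intro h ε hε
    obtain ⟨m, hm⟩ := exists_two_zpow_neg_lt (half_pos hε)
    obtain ⟨N, hN⟩ := h m
    have hδ : (0:ℝ) < 2 ^ (-(N:ℤ)) := by positivity
    refine ⟨2 ^ (-(N:ℤ)), hδ, fun {y} hy hyx => ?_⟩
    rw [Real.dist_eq] at hyx
    have hε4 : 0 < ε / 4 := by positivity
    obtain ⟨q, hq, hqy, hfq⟩ := (hf y hy).exists_rat_near hy hε4 (sub_pos.mpr hyx)
    obtain ⟨r, hr, hrx, hfr⟩ := (hf x hx).exists_rat_near hx hε4 hδ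
    have hqx : |(q:ℝ) - x| < 2 ^ (-(N:ℤ)) := by
      linarith [abs_sub_le (q:ℝ) y x]
    have hqr := hN q r hq hr hqx hrx
    rw [Real.dist_eq]
    rw [abs_sub_comm] at hfq
    linarith [abs_sub_le (f y) (f q) (f x), abs_sub_le (f q) (f r) (f x)]
end

section
/- Let f : [0,1] → ℝ be quasi-continuous at every point of [0,1]. Then there exists x ∈ [0,1] at which f is continuous relative to [0,1] (i.e., ContinuousWithinAt f [0,1] x). -/
/-- A map from a Baire space to a pseudometric space that is quasi-continuous at every point is
continuous on a dense set of points. -/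
theorem dense_continuousAt_of_quasiContinuous {X Y : Type*} [TopologicalSpace X] [BaireSpace X]
    [PseudoMetricSpace Y] (g : X → Y)
    (hg : ∀ x, ∀ ε > (0:ℝ), ∀ U : Set X, IsOpen U → x ∈ U →
      ∃ G : Set X, G.Nonempty ∧ G ⊆ U ∧ IsOpen G ∧ ∀ y ∈ G, dist (g y) (g x) < ε) :
    Dense {x | ContinuousAt g x} := by
  let W : ℕ → Set X := fun n =>
    ⋃₀ {G | IsOpen G ∧ ∀ y ∈ G, ∀ z ∈ G, dist (g y) (g z) < 1 / ((n:ℝ) + 1)}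
  have hW_open : ∀ n, IsOpen (W n) := fun n => isOpen_sUnion fun G hG => hG.1
  have hW_dense : ∀ n, Dense (W n) := by
    intro n
    rw [dense_iff_inter_open]
    rintro U hU ⟨x, hx⟩
    have hε : (0:ℝ) < 1 / ((n:ℝ) + 1) := Nat.one_div_pos_of_nat
    obtain ⟨G, ⟨y, hy⟩, hGU, hG, hGx⟩ := hg x _ (half_pos hε) U hU hx
    refine ⟨y, hGU hy, G, ⟨hG, fun a ha b hb => ?_⟩, hy⟩
    linarith [dist_triangle_right (g a) (g b) (g x), hGx a ha, hGx b hb]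
  refine (dense_iInter_of_isOpen_nat hW_open hW_dense).mono fun x hx => ?_
  rw [Set.mem_ofPred_eq, Metric.continuousAt_iff']
  intro ε hε
  obtain ⟨n, hn⟩ := exists_nat_one_div_lt hε
  obtain ⟨G, ⟨hG, hGd⟩, hxG⟩ := Set.mem_iInter.1 hx n
  filter_upwards [hG.mem_nhds hxG] with y hy
  exact (hGd y hy x hxG).trans hn

theorem quasi_continuous_has_continuity_point
    (f : ℝ → ℝ) (hf : ∀ x ∈ Set.Icc (0:ℝ) 1, QuasiContinuousAt f x) :
    ∃ x ∈ Set.Icc (0:ℝ) 1, ContinuousWithinAt f (Set.Icc 0 1) x := by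
  have hdense : Dense {x | ContinuousAt ((Set.Icc (0:ℝ) 1).domRestrict f) x} := by
    refine dense_continuousAt_of_quasiContinuous _ fun x ε hε U hU hx => ?_
    have hpre : (Subtype.val ⁻¹' (Subtype.val '' U) : Set (Set.Icc (0:ℝ) 1)) = U :=
      Set.preimage_image_eq U Subtype.val_injective
    obtain ⟨G, ⟨y, hy⟩, hGU, hG, hGx⟩ := hf x x.2 ε hε (Subtype.val '' U)
      (Subtype.coe_image_subset _ U) (Set.mem_image_of_mem _ hx) (by rwa [hpre])
    obtain ⟨z, -, rfl⟩ := hGU hy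
    exact ⟨Subtype.val ⁻¹' G, ⟨z, hy⟩, (Set.preimage_mono hGU).trans hpre.le, hG,
      fun y hy => hGx y hy⟩
  obtain ⟨x, hx⟩ := hdense.nonempty
  exact ⟨x, x.2, (continuousWithinAt_iff_continuousAt_domRestrict f x.2).2 hx⟩
end

section
/- Let A ⊆ [0,1], let Y : [0,1] → ℕ be injective on A, and let f : [0,1] → ℝ be given by f(x) = 2^{-(Y(x)+1)} if x ∈ A and f(x) = 0 otherwise. Then for every x ∈ [0,1], f is continuous at x relative to [0,1] (i.e., ContinuousWithinAt f [0,1] x) if and only if x ∉ A. In particular, any point of continuity of f lies outside A. -/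
open Filter Topology

open Classical in
/-- If `Y` is injective on `A`, the function equal to `2 ^ (-(Y x + 1))` on `A` and to `0` elsewhere
tends to `0` along the cofinite filter. -/
lemma tendsto_cofinite_ite_two_zpow_of_injOn {α : Type*} {A : Set α} {Y : α → ℕ}
    (hY : Set.InjOn Y A) :
    Tendsto (fun x => if x ∈ A then (2 : ℝ) ^ (-(Y x + 1 : ℤ)) else 0) cofinite (𝓝 0) := by
  rw [Metric.tendsto_nhds]
  intro ε hε
  obtain ⟨N, hN⟩ := exists_pow_lt_of_lt_one hε (by norm_num : (1 / 2 : ℝ) < 1)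
  have hfin : (A ∩ Y ⁻¹' Set.Iio N).Finite :=
    Set.Finite.of_finite_image ((Set.finite_Iio N).subset (by rintro _ ⟨x, hx, rfl⟩; exact hx.2))
      (hY.mono Set.inter_subset_left)
  filter_upwards [hfin.compl_mem_cofinite] with x hx
  split_ifs with hxA
  · have hNx : N ≤ Y x := not_lt.mp fun h => hx ⟨hxA, h⟩
    rw [dist_zero_right, Real.norm_of_nonneg (by positivity)]
    refine lt_of_le_of_lt ?_ hN
    rw [one_div, inv_pow, ← zpow_natCast, ← zpow_neg]
    exact zpow_le_zpow_right₀ one_le_two (by omega)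
  · simpa using hε

open Classical in
theorem continuity_points_of_injection_indicator
    (A : Set ℝ) (hA : A ⊆ Set.Icc 0 1)
    (Y : ℝ → ℕ) (hY : Set.InjOn Y A)
    (f : ℝ → ℝ)
    (hf : ∀ x ∈ Set.Icc (0:ℝ) 1,
      f x = if x ∈ A then (2:ℝ) ^ (-(Y x + 1 : ℤ)) else 0) :
    ∀ x ∈ Set.Icc (0:ℝ) 1,
      (ContinuousWithinAt f (Set.Icc 0 1) x ↔ x ∉ A) := by
  intro x hx
  have hlim : Tendsto f (𝓝[Set.Icc 0 1 \ {x}] x) (𝓝 0) := by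
    have hle : 𝓝[Set.Icc 0 1 \ {x}] x ≤ cofinite :=
      (nhdsWithin_mono x fun _ hy => hy.2).trans (nhdsNE_le_cofinite x)
    refine ((tendsto_cofinite_ite_two_zpow_of_injOn hY).mono_left hle).congr' ?_
    filter_upwards [self_mem_nhdsWithin] with y hy
    exact (hf y hy.1).symm
  have hne : (𝓝[Set.Icc 0 1 \ {x}] x).NeBot :=
    accPt_principal_iff_nhdsWithin.mp (uniqueDiffOn_Icc zero_lt_one x hx).accPt
  rw [← continuousWithinAt_sdiff_self]
  constructor
  · intro hcont hxA
    have h0 : f x = 0 := tendsto_nhds_unique hcont hlim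
    rw [hf x hx, if_pos hxA] at h0
    exact (zpow_pos two_pos _).ne' h0
  · intro hxA
    rw [ContinuousWithinAt, hf x hx, if_neg hxA]
    exact hlim
end

section
/- Let A ⊆ [0,1], let Y : [0,1] → ℕ be injective on A, and let f : [0,1] → ℝ be given by f(x) = 2^{-(Y(x)+1)} if x ∈ A and f(x) = 0 otherwise. Then f is cliquish at every x₀ ∈ [0,1]. -/
/-- `f` is cliquish at `x₀ ∈ [0,1]`: for every `ε > 0` and every set
`U ⊆ [0,1]` containing `x₀` that is open in the subspace topology of `[0,1]`,
there is a nonempty set `G ⊆ U`, open in the subspace topology of `[0,1]`,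
with `|f x - f y| < ε` for all `x, y ∈ G`. -/
def CliquishAt (f : ℝ → ℝ) (x₀ : ℝ) : Prop :=
  ∀ ε > (0:ℝ), ∀ U : Set ℝ, U ⊆ Set.Icc 0 1 → x₀ ∈ U →
    IsOpen (Subtype.val ⁻¹' U : Set (Set.Icc (0:ℝ) 1)) →
    ∃ G : Set ℝ, G.Nonempty ∧ G ⊆ U ∧
      IsOpen (Subtype.val ⁻¹' G : Set (Set.Icc (0:ℝ) 1)) ∧
      ∀ x ∈ G, ∀ y ∈ G, |f x - f y| < ε

/-- A nonempty relatively open subset of `[0,1]` is infinite. -/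
theorem infinite_of_isOpen_preimage_Icc {U : Set ℝ} {x₀ : ℝ} (hx₀ : x₀ ∈ Set.Icc (0:ℝ) 1)
    (hx₀U : x₀ ∈ U) (hU : IsOpen (Subtype.val ⁻¹' U : Set (Set.Icc (0:ℝ) 1))) :
    U.Infinite := by
  have : Nontrivial (Set.Icc (0:ℝ) 1) := ⟨0, 1, zero_ne_one⟩
  have : ConnectedSpace (Set.Icc (0:ℝ) 1) :=
    Subtype.connectedSpace (isConnected_Icc zero_le_one)
  have hinf : (Subtype.val ⁻¹' U : Set (Set.Icc (0:ℝ) 1)).Infinite :=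
    infinite_of_mem_nhds ⟨x₀, hx₀⟩ (hU.mem_nhds hx₀U)
  exact fun hfin => hinf (hfin.preimage Subtype.val_injective.injOn)

/-- A function injective on `A` takes values below `N` at only finitely many points of `A`. -/
theorem Set.InjOn.finite_setOf_lt {α : Type*} {A : Set α} {Y : α → ℕ} (hY : Set.InjOn Y A)
    (N : ℕ) : {x ∈ A | Y x < N}.Finite :=
  Set.Finite.of_finite_image
    ((Set.finite_Iio N).subset (Set.image_subset_iff.2 fun _ hx => hx.2))
    (hY.mono fun _ hx => hx.1)

open Classical in
theorem injection_indicator_cliquish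
    (A : Set ℝ) (hA : A ⊆ Set.Icc 0 1)
    (Y : ℝ → ℕ) (hY : Set.InjOn Y A)
    (f : ℝ → ℝ)
    (hf : ∀ x ∈ Set.Icc (0:ℝ) 1,
      f x = if x ∈ A then (2:ℝ) ^ (-(Y x + 1 : ℤ)) else 0) :
    ∀ x₀ ∈ Set.Icc (0:ℝ) 1, CliquishAt f x₀ := by
  intro x₀ hx₀ ε hε U hUI hx₀U hU
  obtain ⟨N, hN⟩ := exists_pow_lt_of_lt_one hε (by norm_num : (1 / 2 : ℝ) < 1)
  have hF := hY.finite_setOf_lt N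
  have hbound : ∀ x ∈ U \ {x ∈ A | Y x < N}, 0 ≤ f x ∧ f x ≤ (1 / 2 : ℝ) ^ N := by
    rintro x ⟨hxU, hxF⟩
    rw [hf x (hUI hxU)]
    split_ifs with hxA
    · have hNY : N ≤ Y x := not_lt.1 fun h => hxF ⟨hxA, h⟩
      refine ⟨by positivity, ?_⟩
      rw [one_div, inv_pow, ← zpow_natCast, ← zpow_neg]
      exact zpow_le_zpow_right₀ one_le_two (by lia)
    · exact ⟨le_rfl, by positivity⟩
  refine ⟨U \ {x ∈ A | Y x < N},
    ((infinite_of_isOpen_preimage_Icc hx₀ hx₀U hU).sdiff hF).nonempty, Set.sdiff_subset, ?_, ?_⟩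
  · rw [Set.preimage_sdiff]
    exact hU.sdiff (hF.isClosed.preimage continuous_subtype_val)
  · intro x hx y hy
    obtain ⟨hx0, hx1⟩ := hbound x hx
    obtain ⟨hy0, hy1⟩ := hbound y hy
    exact abs_sub_lt_iff.2 ⟨by linarith, by linarith⟩
end

section
/- Let A ⊆ [0,1], let Y : [0,1] → ℕ be injective on A, and let f : [0,1] → ℝ be given by f(x) = 2^{-(Y(x)+1)} if x ∈ A and f(x) = 0 otherwise. Then f is upper semicontinuous on [0,1], i.e., UpperSemicontinuousOn f [0,1]. -/
open Classical in
theorem injection_indicator_upperSemicontinuousOn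
    (A : Set ℝ) (hA : A ⊆ Set.Icc 0 1)
    (Y : ℝ → ℕ) (hY : Set.InjOn Y A)
    (f : ℝ → ℝ)
    (hf : ∀ x ∈ Set.Icc (0:ℝ) 1,
      f x = if x ∈ A then (2:ℝ) ^ (-(Y x + 1 : ℤ)) else 0) :
    UpperSemicontinuousOn f (Set.Icc 0 1) := by
  intro x hx y hy
  have y_pos : 0 < y := by
    refine lt_of_le_of_lt ?_ hy
    rw [hf x hx]
    split_ifs <;> positivity
  obtain ⟨N, hN⟩ := exists_pow_lt_of_lt_one y_pos (by norm_num : (1 / 2 : ℝ) < 1)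
  have superlevel_finite : {z ∈ A | y ≤ f z}.Finite := by
    refine Set.Finite.of_finite_image ((Set.finite_Iio N).subset ?_)
      (hY.mono fun z hz => hz.1)
    rintro _ ⟨z, ⟨hzA, hz⟩, rfl⟩
    rw [hf z (hA hzA), if_pos hzA] at hz
    by_contra h
    have hNz : N ≤ Y z := not_lt.mp h
    have hle : (2:ℝ) ^ (-(Y z + 1 : ℤ)) ≤ (2:ℝ) ^ (-(N : ℤ)) :=
      zpow_le_zpow_right₀ one_le_two (by lia)
    rw [zpow_neg 2 (N : ℤ), zpow_natCast, ← inv_pow, ← one_div] at hle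
    linarith
  have hmem : {z ∈ A | y ≤ f z}ᶜ ∈ nhds x :=
    superlevel_finite.isClosed.isOpen_compl.mem_nhds fun h => hy.not_ge h.2
  filter_upwards [mem_nhdsWithin_of_mem_nhds hmem, self_mem_nhdsWithin] with z hz hzI
  by_cases hzA : z ∈ A
  · exact not_le.mp fun h => hz ⟨hzA, h⟩
  · rwa [hf z hzI, if_neg hzA]
end

section
/- Let A ⊆ [0,1], let Y : [0,1] → ℕ be injective on A, and let f : [0,1] → ℝ be given by f(x) = 2^{-(Y(x)+1)} if x ∈ A and f(x) = 0 otherwise. Then f equals its own oscillation function: for every x ∈ [0,1], the sequence k ↦ sSup (f '' ([0,1] ∩ B(x, 2^{-k}))) − sInf (f '' ([0,1] ∩ B(x, 2^{-k}))) converges to f(x) as k → ∞, where B(x, r) denotes the open ball of radius r around x. -/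
open Filter Topology Set in
/-- A nonnegative function on `S` that tends to `0` along `S \ {x}` at an accumulation point `x ∈ S`
has oscillation `f x` at `x`. -/
theorem tendsto_sSup_sub_sInf_image_inter_ball {X : Type*} [PseudoMetricSpace X] {S : Set X}
    {f : X → ℝ} {x : X} (hx : x ∈ S) (hS : AccPt x (𝓟 S)) (hf : ∀ y ∈ S, 0 ≤ f y)
    (h : Tendsto f (𝓝[S \ {x}] x) (𝓝 0)) :
    Tendsto (fun r : ℝ => sSup (f '' (S ∩ Metric.ball x r)) - sInf (f '' (S ∩ Metric.ball x r)))
      (𝓝[>] 0) (𝓝 (f x)) := by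
  have hne : (𝓝[S \ {x}] x).NeBot := accPt_principal_iff_nhdsWithin.1 hS
  have hInf : ∀ r > 0, sInf (f '' (S ∩ Metric.ball x r)) = 0 := by
    intro r hr
    have hlb : ∀ z ∈ f '' (S ∩ Metric.ball x r), 0 ≤ z := by
      rintro _ ⟨y, hy, rfl⟩
      exact hf y hy.1
    refine le_antisymm (le_of_forall_pos_le_add fun ε hε => ?_) (Real.sInf_nonneg hlb)
    obtain ⟨y, ⟨hyε, hyS⟩, hyr⟩ := ((h.eventually_lt_const hε).and self_mem_nhdsWithin |>.and
      (mem_nhdsWithin_of_mem_nhds (Metric.ball_mem_nhds x hr))).exists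
    have := csInf_le ⟨0, hlb⟩ (mem_image_of_mem f ⟨hyS.1, hyr⟩)
    linarith
  refine Metric.tendsto_nhds.2 fun ε hε => ?_
  have hsmall : ∀ᶠ y in 𝓝 x, y ∈ S \ {x} → f y < ε / 2 :=
    eventually_nhdsWithin_iff.1 (h.eventually_lt_const (half_pos hε))
  obtain ⟨δ, hδ, hball⟩ := Metric.eventually_nhds_iff_ball.1 hsmall
  filter_upwards [Ioo_mem_nhdsGT hδ] with r hr
  have hub : ∀ z ∈ f '' (S ∩ Metric.ball x r), z ≤ f x + ε / 2 := by
    rintro _ ⟨y, hy, rfl⟩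
    by_cases hyx : y = x
    · subst hyx
      linarith
    · have := hball y (Metric.ball_subset_ball hr.2.le hy.2) ⟨hy.1, hyx⟩
      linarith [hf x hx]
  have hmem : f x ∈ f '' (S ∩ Metric.ball x r) :=
    mem_image_of_mem f ⟨hx, Metric.mem_ball_self hr.1⟩
  have hle := csSup_le ⟨_, hmem⟩ hub
  have hge := le_csSup ⟨_, hub⟩ hmem
  rw [hInf r hr.1, sub_zero, Real.dist_eq, abs_lt]
  constructor <;> linarith

/-- For `Y` injective on `A`, only finitely many points of `A` satisfy `ε ≤ 2 ^ (-(Y y + 1))`. -/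
theorem Set.InjOn.finite_le_two_zpow_neg {α : Type*} {A : Set α} {Y : α → ℕ} (hY : Set.InjOn Y A)
    {ε : ℝ} (hε : 0 < ε) : {y ∈ A | ε ≤ (2:ℝ) ^ (-(Y y + 1 : ℤ))}.Finite := by
  obtain ⟨N, hN⟩ := exists_pow_lt_of_lt_one hε (by norm_num : (2:ℝ)⁻¹ < 1)
  refine Set.Finite.of_injOn (t := Set.Iio N) (fun y hy => ?_) (hY.mono fun y hy => hy.1)
    (Set.finite_Iio N)
  by_contra hlt
  rw [Set.mem_Iio, not_lt] at hlt
  have hle : (2:ℝ) ^ (-(Y y + 1 : ℤ)) ≤ (2:ℝ) ^ (-(N : ℤ)) :=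
    zpow_le_zpow_right₀ one_le_two (by lia)
  rw [zpow_neg _ (N : ℤ), zpow_natCast, ← inv_pow] at hle
  linarith [hy.2]

open Classical in
theorem injection_indicator_equals_own_oscillation
    (A : Set ℝ) (hA : A ⊆ Set.Icc 0 1)
    (Y : ℝ → ℕ) (hY : Set.InjOn Y A)
    (f : ℝ → ℝ)
    (hf : ∀ x ∈ Set.Icc (0:ℝ) 1,
      f x = if x ∈ A then (2:ℝ) ^ (-(Y x + 1 : ℤ)) else 0) :
    ∀ x ∈ Set.Icc (0:ℝ) 1,
      Filter.Tendsto
        (fun k : ℕ =>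
          sSup (f '' (Set.Icc (0:ℝ) 1 ∩ Metric.ball x ((2:ℝ) ^ (-(k:ℤ))))) -
          sInf (f '' (Set.Icc (0:ℝ) 1 ∩ Metric.ball x ((2:ℝ) ^ (-(k:ℤ))))))
        Filter.atTop (nhds (f x)) := by
  intro x hx
  have hnonneg : ∀ y ∈ Set.Icc (0:ℝ) 1, 0 ≤ f y := by
    intro y hy
    rw [hf y hy]
    split_ifs <;> positivity
  have hacc : AccPt x (Filter.principal (Set.Icc (0:ℝ) 1)) :=
    isPreconnected_Icc.preperfect_of_nontrivial
      ⟨0, by simp, 1, by simp, zero_ne_one⟩ x hx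
  have hlim : Filter.Tendsto f (nhdsWithin x (Set.Icc (0:ℝ) 1 \ {x})) (nhds 0) := by
    refine Metric.tendsto_nhds.2 fun ε hε => ?_
    have hfin := (hY.finite_le_two_zpow_neg hε).subset (Set.sdiff_subset (t := {x}))
    have hnhds := hfin.isClosed.isOpen_compl.mem_nhds (x := x) (by simp)
    filter_upwards [self_mem_nhdsWithin, mem_nhdsWithin_of_mem_nhds hnhds] with y hy hyfin
    rw [Real.dist_0_eq_abs, abs_of_nonneg (hnonneg y hy.1), hf y hy.1]
    split_ifs with hyA
    · by_contra! hle
      exact hyfin ⟨⟨hyA, hle⟩, hy.2⟩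
    · exact hε
  have hradius : Filter.Tendsto (fun k : ℕ => (2:ℝ) ^ (-(k:ℤ))) Filter.atTop
      (nhdsWithin 0 (Set.Ioi 0)) := by
    simp only [zpow_neg, zpow_natCast, ← inv_pow]
    exact tendsto_pow_atTop_nhdsWithin_zero_of_lt_one (by norm_num) (by norm_num)
  exact (tendsto_sSup_sub_sInf_image_inter_ball hx hacc hnonneg hlim).comp hradius
end

section
/- Let f : [0,1] → ℝ be upper semicontinuous on [0,1]. Then there exists x ∈ [0,1] at which f is continuous relative to [0,1] (i.e., ContinuousWithinAt f [0,1] x). -/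
/-- An upper semicontinuous real function on a topological space is continuous at every point
outside a meagre set. -/
theorem UpperSemicontinuous.eventually_residual_continuousAt {X : Type*} [TopologicalSpace X]
    {f : X → ℝ} (hf : UpperSemicontinuous f) : ∀ᶠ x in residual X, ContinuousAt f x := by
  have hclosed (q : ℚ) : IsClosed (f ⁻¹' Set.Ici (q : ℝ)) := hf.isClosed_preimage q
  have hres : ∀ᶠ x in residual X, ∀ q : ℚ, x ∉ frontier (f ⁻¹' Set.Ici (q : ℝ)) := by
    refine eventually_countable_forall.2 fun q => ?_
    exact residual_of_dense_open isClosed_frontier.isOpen_compl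
      (interior_eq_empty_iff_dense_compl.1 (interior_frontier (hclosed q)))
  filter_upwards [hres] with x hx
  refine continuousAt_iff_lower_upperSemicontinuousAt.2 ⟨fun y hy => ?_, hf x⟩
  obtain ⟨q, hyq, hqx⟩ := exists_rat_btwn hy
  have hint : x ∈ interior (f ⁻¹' Set.Ici (q : ℝ)) := by
    by_contra h
    exact hx q ⟨subset_closure hqx.le, h⟩
  filter_upwards [mem_interior_iff_mem_nhds.1 hint] with z hz
  exact hyq.trans_le hz

theorem usco_has_continuity_point
    (f : ℝ → ℝ) (hf : UpperSemicontinuousOn f (Set.Icc 0 1)) :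
    ∃ x ∈ Set.Icc (0:ℝ) 1, ContinuousWithinAt f (Set.Icc 0 1) x := by
  have hrestrict : UpperSemicontinuous ((Set.Icc (0:ℝ) 1).domRestrict f) :=
    upperSemicontinuousOn_iff_restrict.2 hf
  obtain ⟨x, hx⟩ :=
    (dense_of_mem_residual hrestrict.eventually_residual_continuousAt).nonempty
  exact ⟨x, x.2, (continuousWithinAt_iff_continuousAt_domRestrict f x.2).2 hx⟩
end
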